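/- (Asymptotic Riemann–Roch for multigraphs.) Let G be a finite connected multigraph (loops allowed) and D a divisor on G. Then lim_{ℓ→∞} (χ(ℓ·D) − deg(D)·ℓ)/ℓ = 0, where χ(D) = r(D) − r(K_G − D); that is, χ(ℓ·D) = deg(D)·ℓ + o(ℓ) as ℓ → ∞. -/

import Mathlib

/-!
The Baker–Norine rank differs from `max (deg D) 0` by a bounded amount, uniformly in `D`.
Writing `k = deg K_G` and `x = ℓ deg D`, the quantity `χ(ℓD) - ℓ deg D` is therefore within a
constant of `max x 0 - max (k - x) 0 - x = max (-x) 0 - max (k - x) 0`, whose absolute value is at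
most `|k|`. So the numerator is bounded, and dividing by `ℓ` gives the limit.

The uniform estimate on the rank (`exists_rank_bound`) reduces to the existence of a constant `C`
such that every divisor of degree at least `C` has nonempty linear series
(`exists_deg_bound`). This follows from finiteness of the Jacobian, used in the following form
(`exists_uniform_multiple`): some `N > 0` makes every `N (u - q)` principal. Indeed, all
coefficients of a divisor outside a base vertex `q` can then be reduced into `[0, N)`, and the
coefficient at `q` is nonnegative once the degree is large. Finiteness itself comes from the maximum
principle: rational functions killed by the graph Laplacian `L` are constant, so `L + J`
(`J` the all-ones matrix) is injective, hence surjective, and `L` hits every rational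
divisor of degree zero.
-/

open Filter

/-- The degree of a divisor on a finite vertex set. -/
def divDeg {V : Type*} [Fintype V] (D : V → ℤ) : ℤ := ∑ v, D v

/-- A divisor is effective if all its coefficients are nonnegative. -/
def divEffective {V : Type*} (D : V → ℤ) : Prop := ∀ v, 0 ≤ D v

/-- A finite multigraph: a symmetric edge-multiplicity function on a finite
vertex set, where `m v v` counts the loops at `v`. -/
structure Multigraph (V : Type*) [Fintype V] where
  m : V → V → ℕ
  symm : ∀ u v, m u v = m v u

namespace Multigraph

variable {V : Type*} [Fintype V] [DecidableEq V] (G : Multigraph V)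

/-- Connectedness of the simple graph having an edge between distinct `u, v`
whenever `m u v > 0`. -/
def Connected : Prop :=
  (SimpleGraph.fromRel fun u v => 0 < G.m u v).Connected

/-- The valence of a vertex: each loop counts twice. -/
def val (v : V) : ℕ := 2 * G.m v v + ∑ u ∈ Finset.univ.erase v, G.m v u

/-- The chip-firing divisor of a vertex `v`. -/
def chip (v : V) : V → ℤ := fun u =>
  if u = v then -(∑ w ∈ Finset.univ.erase v, (G.m v w : ℤ)) else (G.m v u : ℤ)

/-- The subgroup of principal divisors, generated by chip-firing divisors. -/
def prin : AddSubgroup (V → ℤ) := AddSubgroup.closure (Set.range G.chip)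

/-- Linear equivalence of divisors. -/
def LinEquiv (D D' : V → ℤ) : Prop := D - D' ∈ G.prin

/-- The complete linear series of `D`: effective divisors linearly equivalent to `D`. -/
def linSys (D : V → ℤ) : Set (V → ℤ) := {E | divEffective E ∧ G.LinEquiv E D}

open scoped Classical in
/-- The Baker–Norine rank: `-1` if `|D|` is empty, and otherwise the largest
`d ≥ 0` such that `|D - E|` is nonempty for every effective divisor `E` of
degree `d`. -/
noncomputable def rank (D : V → ℤ) : ℤ :=
  if (G.linSys D).Nonempty then
    sSup {d : ℤ | 0 ≤ d ∧ ∀ E : V → ℤ, divEffective E → divDeg E = d →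
      (G.linSys (D - E)).Nonempty}
  else -1

/-- The number of edges of the multigraph. -/
def numEdges : ℕ :=
  (∑ v, G.m v v) + (∑ v, ∑ u ∈ Finset.univ.erase v, G.m v u) / 2

/-- The tropical volume of a divisor: `limsup_{ℓ → ∞} r(ℓ D)/ℓ`. -/
noncomputable def vol (D : V → ℤ) : ℝ :=
  Filter.limsup (fun ℓ : ℕ => (G.rank (fun v => (ℓ : ℤ) * D v) : ℝ) / ℓ) Filter.atTop

end Multigraph

namespace Multigraph

variable {V : Type*} [Fintype V] [DecidableEq V] (G : Multigraph V)

/-! ### Degrees -/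

omit [DecidableEq V] in
lemma divDeg_sub (D E : V → ℤ) : divDeg (D - E) = divDeg D - divDeg E := by
  simp [divDeg]

lemma divDeg_single (q : V) (d : ℤ) : divDeg (Pi.single q d : V → ℤ) = d := by
  simp [divDeg]

lemma divDeg_chip (v : V) : divDeg (G.chip v) = 0 := by
  unfold divDeg chip
  rw [← Finset.add_sum_erase _ _ (Finset.mem_univ v), if_pos rfl,
    Finset.sum_congr rfl (fun u hu => if_neg (Finset.ne_of_mem_erase hu))]
  ring

lemma divDeg_of_mem_prin {D : V → ℤ} (h : D ∈ G.prin) : divDeg D = 0 := by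
  unfold prin at h
  induction h using AddSubgroup.closure_induction with
  | mem x hx => obtain ⟨v, rfl⟩ := hx; exact G.divDeg_chip v
  | zero => simp [divDeg]
  | add x y _ _ hx hy => simp_all [divDeg, Finset.sum_add_distrib]
  | neg x _ hx => simp_all [divDeg]

lemma deg_nonneg_of_nonempty {D : V → ℤ} (h : (G.linSys D).Nonempty) : 0 ≤ divDeg D := by
  obtain ⟨E, hE, hED⟩ := h
  have h1 := G.divDeg_of_mem_prin hED
  rw [divDeg_sub] at h1
  have h2 : 0 ≤ divDeg E := Finset.sum_nonneg fun v _ => hE v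
  omega

/-! ### The Laplacian and finiteness of the Jacobian -/

/-- The graph Laplacian on rational functions, with the sign convention under which it extends
the map sending a vertex to its chip-firing divisor. -/
def lap : (V → ℚ) →ₗ[ℚ] (V → ℚ) where
  toFun f := fun u => ∑ w, (G.m u w : ℚ) * (f w - f u)
  map_add' f g := by
    ext u
    simp only [Pi.add_apply, ← Finset.sum_add_distrib]
    exact Finset.sum_congr rfl fun w _ => by ring
  map_smul' c f := by
    ext u
    simp only [Pi.smul_apply, smul_eq_mul, RingHom.id_apply, Finset.mul_sum]
    exact Finset.sum_congr rfl fun w _ => by ring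

lemma lap_mem_prin (h : V → ℤ) :
    (fun u => ∑ w, (G.m u w : ℤ) * (h w - h u)) ∈ G.prin := by
  have : (fun u => ∑ w, (G.m u w : ℤ) * (h w - h u)) = ∑ v, h v • G.chip v := by
    ext u
    rw [Finset.sum_apply, ← Finset.add_sum_erase _ _ (Finset.mem_univ u),
      ← Finset.add_sum_erase (a := u) _ (fun c => (h c • G.chip c) u) (Finset.mem_univ u)]
    have : ∀ v ∈ Finset.univ.erase u, (h v • G.chip v) u = (G.m u v : ℤ) * h v := by
      intro v hv
      have : u ≠ v := (Finset.ne_of_mem_erase hv).symm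
      simp [chip, this, G.symm u v, mul_comm]
    rw [Finset.sum_congr rfl this]
    simp only [mul_sub, Finset.sum_sub_distrib, Pi.smul_apply, chip, if_true, smul_eq_mul,
      ← Finset.sum_mul]
    ring
  rw [this]
  exact sum_mem fun v _ =>
    zsmul_mem (AddSubgroup.subset_closure (Set.mem_range_self v) : G.chip v ∈ G.prin) _

omit [DecidableEq V] in
lemma sum_lap (f : V → ℚ) : ∑ u, G.lap f u = 0 := by
  simp only [lap, LinearMap.coe_mk, AddHom.coe_mk, mul_sub, Finset.sum_sub_distrib]
  rw [Finset.sum_comm, sub_eq_zero]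
  exact Finset.sum_congr rfl fun u _ => Finset.sum_congr rfl fun w _ => by rw [G.symm]

omit [DecidableEq V] in
/-- Maximum principle: the set where a harmonic function attains its maximum is closed under
adjacency, hence everything. -/
lemma eq_of_lap_eq_zero (hG : G.Connected) {f : V → ℚ} (hf : G.lap f = 0) (u v : V) :
    f u = f v := by
  have := hG.nonempty
  obtain ⟨p, hp⟩ := Finite.exists_max f
  have key : ∀ v, f v = f p := by
    intro v
    obtain ⟨W⟩ := hG.preconnected v p
    induction W with
    | nil => rfl
    | @cons a b c hab _ ih =>
      have hb := ih hp
      have h0 : ∑ w, (G.m b w : ℚ) * (f w - f b) = 0 := congrFun hf b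
      have hle : ∀ w ∈ Finset.univ, (G.m b w : ℚ) * (f w - f b) ≤ 0 := fun w _ =>
        mul_nonpos_of_nonneg_of_nonpos (by positivity) (by linarith [hp w])
      have h1 := (Finset.sum_eq_zero_iff_of_nonpos hle).1 h0 a (Finset.mem_univ a)
      have hm : 0 < G.m b a := by
        rcases (SimpleGraph.fromRel_adj _ _ _).1 hab with ⟨_, h | h⟩
        · rwa [G.symm]
        · exact h
      have hm' : (G.m b a : ℚ) ≠ 0 := by exact_mod_cast hm.ne'
      have := (mul_eq_zero.1 h1).resolve_left hm'
      linarith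
  rw [key u, key v]

omit [DecidableEq V] in
lemma exists_lap_eq (hG : G.Connected) (g : V → ℚ) (hg : ∑ v, g v = 0) :
    ∃ f, G.lap f = g := by
  have := hG.nonempty
  have hcard : (Fintype.card V : ℚ) ≠ 0 := by exact_mod_cast Fintype.card_ne_zero
  let J : (V → ℚ) →ₗ[ℚ] (V → ℚ) := LinearMap.pi fun _ => ∑ v, LinearMap.proj v
  have hJ : ∀ f u, J f u = ∑ v, f v := fun f u => by simp [J]
  have hsum : ∀ f, ∑ u, (G.lap + J) f u = Fintype.card V * ∑ v, f v := by
    intro f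
    simp [Finset.sum_add_distrib, sum_lap, hJ]
  -- A function whose image has total mass zero is itself of mass zero, so `J` vanishes on it.
  have hred : ∀ f, ∑ u, (G.lap + J) f u = 0 → (∑ v, f v = 0) ∧ (G.lap + J) f = G.lap f := by
    intro f h
    have h0 : ∑ v, f v = 0 := (mul_eq_zero.1 ((hsum f).symm.trans h)).resolve_left hcard
    refine ⟨h0, ?_⟩
    ext u
    simp [hJ, h0]
  have hinj : Function.Injective (G.lap + J) := by
    rw [← LinearMap.ker_eq_bot, LinearMap.ker_eq_bot']
    intro f hf
    obtain ⟨h0, h1⟩ := hred f (by simp [hf])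
    have hc := G.eq_of_lap_eq_zero hG (h1.symm.trans hf)
    ext u
    have : ∑ v, f v = Fintype.card V * f u := by
      rw [Finset.sum_congr rfl (fun v _ => hc v u)]; simp
    exact (mul_eq_zero.1 (this.symm.trans h0)).resolve_left hcard
  obtain ⟨f, hf⟩ := LinearMap.injective_iff_surjective.1 hinj g
  exact ⟨f, (hred f (by rw [hf, hg])).2.symm.trans hf⟩

/-- Degree-zero divisors are torsion modulo principal ones. -/
lemma exists_multiple_mem_prin (hG : G.Connected) (D : V → ℤ) (hD : divDeg D = 0) :
    ∃ N : ℕ, 0 < N ∧ (N : ℤ) • D ∈ G.prin := by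
  obtain ⟨f, hf⟩ := G.exists_lap_eq hG (fun v => (D v : ℚ)) (by exact_mod_cast hD)
  obtain ⟨b, hb⟩ := IsLocalization.exist_integer_multiples_of_finite (nonZeroDivisors ℤ) f
  choose h hh using hb
  simp only [eq_intCast, zsmul_eq_mul] at hh
  have hmem : (b : ℤ) • D ∈ G.prin := by
    convert G.lap_mem_prin h using 1
    ext u
    have hu : ∑ w, (G.m u w : ℚ) * (f w - f u) = D u := congrFun hf u
    have : (((b : ℤ) * D u : ℤ) : ℚ)
        = ((∑ w, (G.m u w : ℤ) * (h w - h u) : ℤ) : ℚ) := by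
      push_cast
      rw [← hu, Finset.mul_sum]
      refine Finset.sum_congr rfl fun w _ => ?_
      rw [hh, hh]; ring
    simpa using Int.cast_injective this
  refine ⟨(b : ℤ).natAbs, Int.natAbs_pos.2 (nonZeroDivisors.ne_zero b.2), ?_⟩
  rcases Int.natAbs_eq (b : ℤ) with h | h
  · rwa [← h]
  · rw [show (((b : ℤ).natAbs : ℕ) : ℤ) = -(b : ℤ) by omega, neg_smul]
    exact neg_mem hmem

lemma exists_uniform_multiple (hG : G.Connected) (q : V) :
    ∃ N : ℕ, 0 < N ∧
      ∀ u, (N : ℤ) • (Pi.single u 1 - Pi.single q 1 : V → ℤ) ∈ G.prin := by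
  choose n hn hmem using fun u =>
    G.exists_multiple_mem_prin hG (Pi.single u 1 - Pi.single q 1 : V → ℤ)
      (by rw [divDeg_sub, divDeg_single, divDeg_single, sub_self])
  refine ⟨∏ u, n u, Finset.prod_pos fun u _ => hn u, fun u => ?_⟩
  rw [← Finset.prod_erase_mul _ _ (Finset.mem_univ u), Nat.cast_mul, mul_smul]
  exact zsmul_mem (hmem u) _

/-! ### Divisors of large degree and the rank -/

lemma exists_deg_bound (hG : G.Connected) :
    ∃ C : ℤ, 0 ≤ C ∧ ∀ D : V → ℤ, C ≤ divDeg D → (G.linSys D).Nonempty := by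
  obtain ⟨q⟩ := hG.nonempty
  obtain ⟨N, hN, hmem⟩ := G.exists_uniform_multiple hG q
  have hN' : (0 : ℤ) < N := by exact_mod_cast hN
  refine ⟨Fintype.card V * N, by positivity, fun D hD => ?_⟩
  let P : V → ℤ := ∑ u, (D u / N) • ((N : ℤ) • (Pi.single u 1 - Pi.single q 1 : V → ℤ))
  have hP : P ∈ G.prin := sum_mem fun u _ => zsmul_mem (hmem u) _
  -- Away from `q`, subtracting `P` leaves the residues of `D` modulo `N`.
  have hoff : ∀ v, v ≠ q → (D - P) v = D v % N := by
    intro v hv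
    have : P v = D v / N * N := by
      simp [P, Finset.sum_apply, Pi.single_apply, hv, mul_sub]
    rw [Pi.sub_apply, this]
    linarith [Int.emod_add_mul_ediv (D v) N, mul_comm (N : ℤ) (D v / N)]
  refine ⟨D - P, fun v => ?_, ?_⟩
  · by_cases hv : v = q
    · subst hv
      have hdeg : divDeg (D - P) = divDeg D := by
        rw [divDeg_sub, G.divDeg_of_mem_prin hP, sub_zero]
      have h1 : divDeg (D - P) = (D - P) v + ∑ u ∈ Finset.univ.erase v, (D - P) u :=
        (Finset.add_sum_erase _ _ (Finset.mem_univ v)).symm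
      have h2 : ∑ u ∈ Finset.univ.erase v, (D - P) u ≤ ∑ u ∈ Finset.univ.erase v, (N : ℤ) :=
        Finset.sum_le_sum fun u hu => by
          rw [hoff u (Finset.ne_of_mem_erase hu)]
          exact (Int.emod_lt_of_pos _ hN').le
      have h3 : ∑ u ∈ Finset.univ.erase v, (N : ℤ) ≤ ∑ _u : V, (N : ℤ) :=
        Finset.sum_le_sum_of_subset_of_nonneg (Finset.subset_univ _) fun _ _ _ => hN'.le
      have h4 : ∑ _u : V, (N : ℤ) = Fintype.card V * N := by simp
      linarith
    · rw [hoff v hv]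
      exact Int.emod_nonneg _ hN'.ne'
  · change D - P - D ∈ G.prin
    rw [show D - P - D = -P by abel]
    exact neg_mem hP

lemma exists_rank_bound (hG : G.Connected) :
    ∃ C : ℤ, ∀ D : V → ℤ, |G.rank D - max (divDeg D) 0| ≤ C := by
  obtain ⟨C, hC0, hC⟩ := G.exists_deg_bound hG
  obtain ⟨q⟩ := hG.nonempty
  refine ⟨C + 1, fun D => ?_⟩
  unfold rank
  split_ifs with hne
  · have hd := G.deg_nonneg_of_nonempty hne
    set S := {d : ℤ | 0 ≤ d ∧ ∀ E : V → ℤ, divEffective E → divDeg E = d →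
      (G.linSys (D - E)).Nonempty}
    have h0 : (0 : ℤ) ∈ S := by
      refine ⟨le_rfl, fun E hE hE0 => ?_⟩
      have : E = 0 := by
        ext v
        exact (Finset.sum_eq_zero_iff_of_nonneg fun v _ => hE v).1 hE0 v (Finset.mem_univ v)
      rwa [this, sub_zero]
    have hub : ∀ d ∈ S, d ≤ divDeg D := by
      rintro d ⟨hd0, hd⟩
      have := G.deg_nonneg_of_nonempty (hd (Pi.single q d)
        (fun v => by by_cases h : v = q <;> simp [h, hd0]) (divDeg_single q d))
      rw [divDeg_sub, divDeg_single] at this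
      omega
    have hbdd : BddAbove S := ⟨_, hub⟩
    have h1 : sSup S ≤ divDeg D := csSup_le ⟨0, h0⟩ hub
    have h2 : 0 ≤ sSup S := le_csSup hbdd h0
    have h3 : divDeg D - C ≤ sSup S := by
      rcases le_total C (divDeg D) with h | h
      · refine le_csSup hbdd ⟨by omega, fun E _ hE => hC _ ?_⟩
        rw [divDeg_sub, hE]; omega
      · omega
    rw [max_eq_left hd, abs_le]
    constructor <;> omega
  · have : divDeg D < C := by
      by_contra! h
      exact hne (hC D h)
    rw [abs_le]
    constructor <;> omega

end Multigraph

/-- Asymptotic Riemann–Roch for multigraphs: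
`(χ(ℓ·D) - deg(D)·ℓ)/ℓ → 0` as `ℓ → ∞`, where `χ(D) = r(D) - r(K_G - D)`
and `K_G(v) = val(v) - 2`. -/
theorem asymptotic_riemann_roch {V : Type*} [Fintype V] [DecidableEq V]
    (G : Multigraph V) (hG : G.Connected) (D : V → ℤ) :
    Filter.Tendsto
      (fun ℓ : ℕ =>
        (((G.rank (fun v => (ℓ : ℤ) * D v)
            - G.rank (fun v => ((G.val v : ℤ) - 2) - (ℓ : ℤ) * D v)
            - divDeg D * ℓ : ℤ) : ℝ)) / ℓ)
      Filter.atTop (nhds 0) := by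
  obtain ⟨C, hC⟩ := G.exists_rank_bound hG
  set k : ℤ := divDeg fun v => (G.val v : ℤ) - 2
  -- The numerator is bounded by `2 C + |k|`, independently of `ℓ`.
  have hnum : ∀ ℓ : ℕ, |G.rank (fun v => (ℓ : ℤ) * D v)
      - G.rank (fun v => ((G.val v : ℤ) - 2) - (ℓ : ℤ) * D v) - divDeg D * ℓ|
      ≤ 2 * C + |k| := by
    intro ℓ
    have h1 := hC fun v => (ℓ : ℤ) * D v
    have h2 := hC fun v => ((G.val v : ℤ) - 2) - (ℓ : ℤ) * D v
    have e1 : divDeg (fun v => (ℓ : ℤ) * D v) = divDeg D * ℓ := by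
      simp only [divDeg, mul_comm (ℓ : ℤ), Finset.sum_mul]
    have e2 : divDeg (fun v => ((G.val v : ℤ) - 2) - (ℓ : ℤ) * D v) = k - divDeg D * ℓ := by
      rw [← e1]
      exact Multigraph.divDeg_sub (fun v => (G.val v : ℤ) - 2) fun v => (ℓ : ℤ) * D v
    rw [e1] at h1
    rw [e2] at h2
    generalize divDeg D * (ℓ : ℤ) = x at *
    rw [abs_le] at *
    have := le_abs_self k
    have := neg_abs_le k
    constructor <;> omega
  refine squeeze_zero_norm (a := fun ℓ : ℕ => ((2 * C + |k| : ℤ) : ℝ) / ℓ) (fun ℓ => ?_)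
    (tendsto_const_div_atTop_nhds_zero_nat _)
  rw [norm_div, Real.norm_natCast, Real.norm_eq_abs, ← Int.cast_abs]
  gcongr
  exact hnum ℓ
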